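/- For all integers d ≥ 2 and g ≥ 3, there exists a finite simple d-regular graph G with girth at least g having at most 4·∑_{i=0}^{g-2}(d-1)^i vertices. -/

import Mathlib

/-!
Among the graphs on a given vertex set with maximum degree at most `d` and girth at least `g`, take
one with the most edges. If it is not regular, then by parity there are vertices `x` and `y` such
that `x` and `y` may each gain an edge, or `x = y` may gain two. A vertex of degree less than `d`
has at most `∑ i < g - 1, (d - 1) ^ i` vertices at distance less than `g - 1`, so the set `W` of
vertices at distance at least `g - 1` from both `x` and `y` contains at least half of all vertices.
If some `w ∈ W` has degree less than `d`, the edge `w x` can be added. Otherwise all vertices of `W`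
have degree `d`, and counting the edges leaving `W` shows that `W` is not independent, so it spans
an edge `u v`. Trading `u v` for `u x` and `v y` keeps the girth and gains an edge, which
contradicts maximality.
-/

namespace ErdosSachs

open Finset SimpleGraph

variable {V : Type*} {G : SimpleGraph V}

section Girth

theorem egirth_le_edist_deleteEdges_add_one {a b : V} (hab : G.Adj a b) :
    G.egirth ≤ (G.deleteEdges {s(a, b)}).edist a b + 1 := by
  classical
  by_cases htop : (G.deleteEdges {s(a, b)}).edist a b = ⊤
  · simp [htop]
  obtain ⟨p, hp⟩ := (reachable_of_edist_ne_top htop).symm.exists_walk_length_eq_edist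
  have hcycle : (Walk.cons hab (p.bypass.mapLe (deleteEdges_le _))).IsCycle := by
    refine (Walk.cons_isCycle_iff _ _).2 ⟨p.bypass_isPath.mapLe _, fun hmem => ?_⟩
    rw [Walk.edges_mapLe_eq_edges] at hmem
    simpa using p.bypass.edges_subset_edgeSet hmem
  calc G.egirth ≤ p.bypass.length + 1 := by simpa using egirth_le_length hcycle
    _ ≤ p.length + 1 := by gcongr; exact p.length_bypass_le_length
    _ = _ := by rw [hp, edist_comm]

theorem le_egirth_of_forall_le_edist_deleteEdges_add_one {n : ℕ∞}
    (h : ∀ a b, G.Adj a b → n ≤ (G.deleteEdges {s(a, b)}).edist a b + 1) : n ≤ G.egirth := by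
  refine le_egirth.2 fun a w hw => ?_
  cases w with
  | nil => simp at hw
  | @cons _ b _ hab p =>
    have hp := ((Walk.cons_isCycle_iff p hab).1 hw).2
    calc n ≤ (G.deleteEdges {s(a, b)}).edist b a + 1 := by rw [edist_comm]; exact h a b hab
      _ ≤ (p.toDeleteEdge s(a, b) hp).length + 1 := by gcongr; exact edist_le _
      _ = (Walk.cons hab p).length := by simp

theorem edist_le_edist_add_one_of_adj {a b : V} (hab : G.Adj a b) (c : V) :
    G.edist a c ≤ G.edist b c + 1 := by
  calc G.edist a c ≤ G.edist a b + G.edist b c := SimpleGraph.edist_triangle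
    _ = G.edist b c + 1 := by rw [edist_eq_one_iff_adj.2 hab, add_comm]

theorem min_edist_le_edist_sup_edge (a b c e : V) :
    min (G.edist c e) (min (G.edist c a + (G.edist b e + 1)) (G.edist c b + (G.edist a e + 1))) ≤
      (G ⊔ edge a b).edist c e := by
  refine le_iInf fun w => ?_
  induction w with
  | nil => simp
  | @cons c c' e hcc' w ih =>
    simp only [Walk.length_cons, Nat.cast_add_one, min_le_iff] at ih ⊢
    generalize (w.length : ℕ∞) = l at ih
    rw [sup_adj, edge_adj] at hcc'
    rcases hcc' with hcc' | ⟨⟨rfl, rfl⟩ | ⟨rfl, rfl⟩, -⟩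
    · have hlip := edist_le_edist_add_one_of_adj hcc'
      rcases ih with ih | ih | ih
      · exact .inl ((hlip e).trans (by gcongr))
      · refine .inr (.inl ?_)
        grw [hlip a, ← ih, add_right_comm]
      · refine .inr (.inr ?_)
        grw [hlip b, ← ih, add_right_comm]
    · rcases ih with ih | ih | ih
      · exact .inr (.inl (by simpa using add_le_add_left ih 1))
      · exact .inr (.inl (by simpa using le_of_add_le_left (le_of_add_le_right ih)))
      · exact .inl ((le_of_add_le_left (le_of_add_le_right ih)).trans le_self_add)
    · rcases ih with ih | ih | ih
      · exact .inr (.inr (by simpa using add_le_add_left ih 1))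
      · exact .inl ((le_of_add_le_left (le_of_add_le_right ih)).trans le_self_add)
      · exact .inr (.inr (by simpa using le_of_add_le_left (le_of_add_le_right ih)))

theorem edist_le_edist_deleteEdges_add {a b c e : V} (hce : G.Adj c e) :
    G.edist a b ≤ (G.deleteEdges {s(c, e)}).edist c a +
      ((G.deleteEdges {s(c, e)}).edist b e + 1) := by
  have hle : G.deleteEdges {s(c, e)} ≤ G := deleteEdges_le _
  calc G.edist a b ≤ G.edist a c + G.edist c b := SimpleGraph.edist_triangle
    _ ≤ G.edist c a + (G.edist b e + 1) := by
        rw [edist_comm (u := a), edist_comm (u := b)]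
        gcongr
        exact edist_le_edist_add_one_of_adj hce b
    _ ≤ _ := by gcongr

theorem min_egirth_le_egirth_sup_edge (a b : V) :
    min G.egirth (G.edist a b + 1) ≤ (G ⊔ edge a b).egirth := by
  refine le_egirth_of_forall_le_edist_deleteEdges_add_one fun c e hce => ?_
  by_cases hG : G.Adj c e
  · have hle : (G ⊔ edge a b).deleteEdges {s(c, e)} ≤ G.deleteEdges {s(c, e)} ⊔ edge a b := by
      rw [deleteEdges_sup]
      exact sup_le_sup_left (deleteEdges_le _) _
    -- If the new edge is used, going the other way round through `c e` joins `a` to `b` in `G`.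
    calc min G.egirth (G.edist a b + 1)
        ≤ (G.deleteEdges {s(c, e)} ⊔ edge a b).edist c e + 1 := by
          grw [← min_edist_le_edist_sup_edge a b c e]
          simp only [min_add, le_min_iff]
          refine ⟨min_le_of_left_le (egirth_le_edist_deleteEdges_add_one hG),
            min_le_of_right_le ?_, min_le_of_right_le ?_⟩
          · grw [edist_le_edist_deleteEdges_add hG]
          · rw [edist_comm]
            grw [edist_le_edist_deleteEdges_add hG]
      _ ≤ _ := by gcongr
  · have hce : s(c, e) = s(a, b) :=
      ((adj_edge a b).1 (((sup_adj ..).1 hce).resolve_left hG)).1.symm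
    have hle : (G ⊔ edge a b).deleteEdges {s(c, e)} ≤ G := by
      simp [deleteEdges_sup, hce]
    have hdist : G.edist c e = G.edist a b := by
      rcases Sym2.eq_iff.1 hce with ⟨rfl, rfl⟩ | ⟨rfl, rfl⟩
      exacts [rfl, edist_comm]
    exact min_le_of_right_le (by rw [← hdist]; gcongr)

end Girth

section Degree

variable [Fintype V]

theorem degree_sup_edge [DecidableEq V] {a b : V} [DecidableRel G.Adj]
    [DecidableRel (G ⊔ edge a b).Adj] (hne : a ≠ b) (hab : ¬ G.Adj a b) (v : V) :
    (G ⊔ edge a b).degree v =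
      G.degree v + (if v = a then 1 else 0) + (if v = b then 1 else 0) := by
  rw [← card_incidenceFinset_eq_degree, ← card_incidenceFinset_eq_degree, incidenceFinset_eq_filter,
    incidenceFinset_eq_filter, edgeFinset_sup_edge G hab hne, filter_cons]
  have hv : v ∈ s(a, b) ↔ v = a ∨ v = b := Sym2.mem_iff
  grind

theorem even_sum_sub_degree [DecidableRel G.Adj] {d : ℕ} (hdeg : ∀ v, G.degree v ≤ d)
    (heven : Even (Fintype.card V * d)) : Even (∑ v, (d - G.degree v)) := by
  have hsum : ∑ v, (d - G.degree v) + 2 * #G.edgeFinset = Fintype.card V * d := by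
    rw [← G.sum_degrees_eq_twice_card_edges, ← sum_add_distrib,
      sum_congr rfl fun v _ => Nat.sub_add_cancel (hdeg v)]
    simp
  grind

theorem exists_forall_degree_add_ite_le [DecidableEq V] [DecidableRel G.Adj] {d : ℕ}
    (hdeg : ∀ v, G.degree v ≤ d) (heven : Even (Fintype.card V * d))
    (hreg : ¬ G.IsRegularOfDegree d) :
    ∃ x y, ∀ v, G.degree v + (if v = x then 1 else 0) + (if v = y then 1 else 0) ≤ d := by
  obtain ⟨x, hx⟩ := not_forall.1 hreg
  by_cases hy : ∃ y ≠ x, G.degree y ≠ d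
  · obtain ⟨y, hyx, hy⟩ := hy
    exact ⟨x, y, by grind⟩
  · push Not at hy
    have hsum : ∑ v, (d - G.degree v) = d - G.degree x :=
      Fintype.sum_eq_single x fun v hv => by simp [hy v hv]
    have hdeficit : Even (d - G.degree x) := hsum ▸ even_sum_sub_degree hdeg heven
    exact ⟨x, x, by grind⟩

theorem sum_degree_le_sum_degree_compl [DecidableEq V] [DecidableRel G.Adj] {W : Finset V}
    (hW : G.IsIndepSet W) : ∑ v ∈ W, G.degree v ≤ ∑ v ∈ Wᶜ, G.degree v := by
  have hout : ∀ w ∈ W, G.neighborFinset w = {b ∈ Wᶜ | G.Adj w b} := by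
    intro w hw
    ext b
    have hb : G.Adj w b → b ∉ W := fun h hb => hW hw hb h.ne h
    simpa
  calc ∑ w ∈ W, G.degree w = ∑ w ∈ W, #{b ∈ Wᶜ | G.Adj w b} :=
        sum_congr rfl fun w hw => by rw [← hout w hw, card_neighborFinset_eq_degree]
    _ = ∑ b ∈ Wᶜ, #{w ∈ W | G.Adj w b} := sum_card_bipartiteAbove_eq_sum_card_bipartiteBelow _
    _ ≤ ∑ b ∈ Wᶜ, G.degree b := by
        refine sum_le_sum fun b _ => card_le_card fun w hw => ?_
        simpa [G.adj_comm] using (mem_filter.1 hw).2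

theorem exists_adj_of_card_le_two_mul_card [DecidableRel G.Adj] {d : ℕ} {W : Finset V} {x : V}
    (hdeg : ∀ v, G.degree v ≤ d) (hx : G.degree x < d) (hW : ∀ w ∈ W, G.degree w = d)
    (hcard : Fintype.card V ≤ 2 * #W) : ∃ u ∈ W, ∃ v ∈ W, G.Adj u v := by
  classical
  by_contra! hindep
  have hxW : x ∈ Wᶜ := mem_compl.2 fun h => hx.ne (hW x h)
  have hcompl : #Wᶜ ≤ #W := by rw [card_compl]; omega
  refine lt_irrefl (#W * d) ?_
  calc #W * d = ∑ w ∈ W, G.degree w := by rw [sum_congr rfl hW, sum_const, smul_eq_mul]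
    _ ≤ ∑ v ∈ Wᶜ, G.degree v :=
        sum_degree_le_sum_degree_compl fun u hu v hv _ => hindep u hu v hv
    _ < ∑ _v ∈ Wᶜ, d := sum_lt_sum (fun v _ => hdeg v) ⟨x, hxW, hx⟩
    _ = #Wᶜ * d := by rw [sum_const, smul_eq_mul]
    _ ≤ #W * d := Nat.mul_le_mul_right d hcompl

end Degree

section Ball

theorem exists_adj_edist_eq {u x : V} {n : ℕ} (h : G.edist u x = n + 1) :
    ∃ z, G.Adj u z ∧ G.edist z x = n := by
  obtain ⟨p, hp⟩ := exists_walk_of_edist_eq_coe (k := n + 1) (by simpa using h)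
  cases p with
  | nil => simp at hp
  | @cons _ z _ huz q =>
    refine ⟨z, huz, le_antisymm ?_ ?_⟩
    · have hq : q.length = n := by simpa using hp
      exact hq ▸ edist_le q
    · exact (ENat.add_le_add_iff_right ENat.one_ne_top).1
        (h ▸ edist_le_edist_add_one_of_adj huz x)

variable [Fintype V]

theorem card_filter_neighborFinset_edist_eq_le [DecidableRel G.Adj] {b n : ℕ} {x u : V}
    (hx : G.degree x ≤ b) (hdeg : ∀ v, G.degree v ≤ b + 1) (hu : G.edist u x = n) :
    #{v ∈ G.neighborFinset u | G.edist v x = n + 1} ≤ b := by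
  classical
  cases n with
  | zero =>
    obtain rfl : u = x := by simpa using hu
    exact (card_filter_le _ _).trans hx
  | succ n =>
    obtain ⟨z, huz, hz⟩ := exists_adj_edist_eq (by simpa using hu)
    have hsub : {v ∈ G.neighborFinset u | G.edist v x = (n + 1 : ℕ) + 1} ⊆
        (G.neighborFinset u).erase z := by
      intro v hv
      rw [mem_filter] at hv
      refine mem_erase.2 ⟨?_, hv.1⟩
      rintro rfl
      have hcast : n = n + 1 + 1 := by exact_mod_cast hz.symm.trans hv.2
      omega
    calc _ ≤ #((G.neighborFinset u).erase z) := card_le_card hsub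
      _ = G.degree u - 1 := by
          rw [card_erase_of_mem (by simpa), card_neighborFinset_eq_degree]
      _ ≤ b := Nat.sub_le_iff_le_add.2 (hdeg u)

theorem card_filter_edist_eq_le_pow [DecidableRel G.Adj] {b : ℕ} {x : V} (hx : G.degree x ≤ b)
    (hdeg : ∀ v, G.degree v ≤ b + 1) (n : ℕ) : #{v | G.edist v x = n} ≤ b ^ n := by
  classical
  induction n with
  | zero => exact card_le_one.2 (by simp)
  | succ n ih =>
    have hsub : ({v | G.edist v x = (n + 1 : ℕ)} : Finset V) ⊆
        ({u | G.edist u x = n} : Finset V).biUnion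
          fun u => {v ∈ G.neighborFinset u | G.edist v x = n + 1} := by
      intro v hv
      obtain ⟨u, hvu, hu⟩ := exists_adj_edist_eq (by simpa using hv)
      simp only [mem_biUnion, mem_filter, mem_univ, true_and, mem_neighborFinset]
      exact ⟨u, hu, hvu.symm, by simpa using hv⟩
    calc #{v | G.edist v x = (n + 1 : ℕ)} ≤ _ := card_le_card hsub
      _ ≤ #{u | G.edist u x = n} * b := card_biUnion_le_card_mul _ _ _ fun u hu =>
          card_filter_neighborFinset_edist_eq_le hx hdeg (mem_filter.1 hu).2
      _ ≤ b ^ n * b := Nat.mul_le_mul_right b ih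
      _ = b ^ (n + 1) := (pow_succ b n).symm

theorem card_filter_edist_lt_le_sum_pow [DecidableRel G.Adj] {b : ℕ} {x : V} (hx : G.degree x ≤ b)
    (hdeg : ∀ v, G.degree v ≤ b + 1) (n : ℕ) :
    #{v | G.edist v x < n} ≤ ∑ i ∈ range n, b ^ i := by
  classical
  have hsub : ({v | G.edist v x < n} : Finset V) ⊆
      (range n).biUnion fun i => {v | G.edist v x = i} := by
    intro v hv
    rw [mem_filter_univ] at hv
    obtain ⟨i, hi⟩ := ENat.ne_top_iff_exists.1 hv.ne_top
    rw [← hi, Nat.cast_lt] at hv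
    simpa using ⟨i, hv, hi.symm⟩
  calc #{v | G.edist v x < n} ≤ _ := card_le_card hsub
    _ ≤ ∑ i ∈ range n, #{v | G.edist v x = i} := card_biUnion_le
    _ ≤ ∑ i ∈ range n, b ^ i := sum_le_sum fun i _ => card_filter_edist_eq_le_pow hx hdeg i

theorem card_le_two_mul_card_filter_le_edist [DecidableRel G.Adj] {b k : ℕ} {x y : V}
    (hx : G.degree x ≤ b) (hy : G.degree y ≤ b) (hdeg : ∀ v, G.degree v ≤ b + 1)
    (hcard : 4 * ∑ i ∈ range k, b ^ i ≤ Fintype.card V) :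
    Fintype.card V ≤ 2 * #{w | k ≤ G.edist w x ∧ k ≤ G.edist w y} := by
  classical
  have hcover : (univ : Finset V) ⊆ ({w | k ≤ G.edist w x ∧ k ≤ G.edist w y} : Finset V) ∪
      (({w | G.edist w x < k} : Finset V) ∪
        ({w | G.edist w y < k} : Finset V)) := by
    intro w _
    simp only [mem_union, mem_filter, mem_univ, true_and, ← not_le]
    tauto
  have hle := (card_le_card hcover).trans ((card_union_le ..).trans
    (Nat.add_le_add_left (card_union_le ..) _))
  have hballx := card_filter_edist_lt_le_sum_pow hx hdeg k
  have hbally := card_filter_edist_lt_le_sum_pow hy hdeg k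
  rw [card_univ] at hle
  omega

end Ball

section Switch

/-- The switch of `G` that trades the edge `u v` for the two edges `u x` and `v y`. When these are
new, it raises the degrees of `x` and `y` (by two if `x = y`) and keeps all others. -/
def switch (G : SimpleGraph V) (u v x y : V) : SimpleGraph V :=
  G.deleteEdges {s(u, v)} ⊔ edge u x ⊔ edge v y

theorem deleteEdges_sup_edge_of_adj {u v : V} (huv : G.Adj u v) :
    G.deleteEdges {s(u, v)} ⊔ edge u v = G := by
  rw [deleteEdges, edge, sdiff_sup_cancel (by simp [huv])]

theorem ne_and_not_adj_of_two_le_edist {a b : V} (h : 2 ≤ G.edist a b) : a ≠ b ∧ ¬ G.Adj a b := by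
  have hne := edist_le_one_iff_adj_or_eq.not.1 (lt_of_lt_of_le (by norm_num) h).not_ge
  tauto

theorem add_one_le_egirth_sup_edge {k : ℕ∞} {a b : V} (hgirth : k + 1 ≤ G.egirth)
    (hab : k ≤ G.edist a b) : k + 1 ≤ (G ⊔ edge a b).egirth :=
  (le_min hgirth (by gcongr)).trans (min_egirth_le_egirth_sup_edge a b)

theorem add_one_le_egirth_switch {k : ℕ∞} {u v x y : V} (hgirth : k + 1 ≤ G.egirth)
    (huv : G.Adj u v) (hux : k ≤ G.edist u x) (hvx : k ≤ G.edist v x) (hvy : k ≤ G.edist v y) :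
    k + 1 ≤ (switch G u v x y).egirth := by
  have hle : G.deleteEdges {s(u, v)} ≤ G := deleteEdges_le _
  have hvu : k ≤ (G.deleteEdges {s(u, v)}).edist v u := by
    rw [edist_comm]
    exact (ENat.add_le_add_iff_right ENat.one_ne_top).1
      (hgirth.trans (egirth_le_edist_deleteEdges_add_one huv))
  -- A `v`-`y` walk through the new edge `u x` starts with a walk from `v` to `x` or to `u`, the
  -- latter avoiding the edge `u v`.
  have hvy' : k ≤ (G.deleteEdges {s(u, v)} ⊔ edge u x).edist v y :=
    le_trans (le_min (hvy.trans (edist_anti hle)) (le_min (le_add_right hvu)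
      (le_add_right (hvx.trans (edist_anti hle))))) (min_edist_le_edist_sup_edge u x v y)
  exact add_one_le_egirth_sup_edge
    (add_one_le_egirth_sup_edge (hgirth.trans (egirth_anti hle)) (hux.trans (edist_anti hle))) hvy'

variable [Fintype V]

theorem degree_switch [DecidableEq V] [DecidableRel G.Adj] {u v x y : V}
    [DecidableRel (switch G u v x y).Adj] (huv : G.Adj u v) (hux : u ≠ x ∧ ¬ G.Adj u x)
    (hvy : v ≠ y ∧ ¬ G.Adj v y) (hvx : v ≠ x) (w : V) :
    (switch G u v x y).degree w =
      G.degree w + (if w = x then 1 else 0) + (if w = y then 1 else 0) := by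
  classical
  have hle : G.deleteEdges {s(u, v)} ≤ G := deleteEdges_le _
  have hdel : G.degree w = (G.deleteEdges {s(u, v)}).degree w + (if w = u then 1 else 0) +
      (if w = v then 1 else 0) := by
    rw [← degree_sup_edge huv.ne (by simp) w]
    congr!
    exact (deleteEdges_sup_edge_of_adj huv).symm
  have hadd := degree_sup_edge hux.1 (fun h => hux.2 (hle h)) w
  have hvy' : ¬ (G.deleteEdges {s(u, v)} ⊔ edge u x).Adj v y := by
    rintro (h | h)
    · exact hvy.2 (hle h)
    · grind [adj_edge, huv.ne]
  have hswitch : (switch G u v x y).degree w = (G.deleteEdges {s(u, v)} ⊔ edge u x).degree w +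
      (if w = v then 1 else 0) + (if w = y then 1 else 0) := by
    rw [← degree_sup_edge hvy.1 hvy' w]
    congr!
  omega

theorem card_edgeFinset_eq_add_one_of_degree_eq [DecidableEq V] [DecidableRel G.Adj]
    {H : SimpleGraph V} [DecidableRel H.Adj] {x y : V}
    (h : ∀ w, H.degree w = G.degree w + (if w = x then 1 else 0) + (if w = y then 1 else 0)) :
    #H.edgeFinset = #G.edgeFinset + 1 := by
  have hsum : ∑ w, H.degree w = ∑ w, G.degree w + 1 + 1 := by
    simp [h, sum_add_distrib]
  rw [sum_degrees_eq_twice_card_edges, sum_degrees_eq_twice_card_edges] at hsum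
  omega

open Classical in
theorem exists_card_edgeFinset_lt_of_not_isRegularOfDegree {d k : ℕ} (hk : 2 ≤ k)
    (hdeg : ∀ v, G.degree v ≤ d) (hgirth : (k : ℕ∞) + 1 ≤ G.egirth)
    (heven : Even (Fintype.card V * d))
    (hcard : 4 * ∑ i ∈ range k, (d - 1) ^ i ≤ Fintype.card V) (hreg : ¬ G.IsRegularOfDegree d) :
    ∃ H : SimpleGraph V, (∀ v, H.degree v ≤ d) ∧ (k : ℕ∞) + 1 ≤ H.egirth ∧
      #G.edgeFinset < #H.edgeFinset := by
  obtain ⟨x, y, hxy⟩ := exists_forall_degree_add_ite_le hdeg heven hreg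
  have hx : G.degree x < d := by grind
  have hy : G.degree y < d := by grind
  have hsep {a b : V} (h : k ≤ G.edist a b) : a ≠ b ∧ ¬ G.Adj a b :=
    ne_and_not_adj_of_two_le_edist (le_trans (by exact_mod_cast hk) h)
  suffices ∃ (H : SimpleGraph V) (x y : V), (k : ℕ∞) + 1 ≤ H.egirth ∧
      (∀ v, G.degree v + (if v = x then 1 else 0) + (if v = y then 1 else 0) ≤ d) ∧
      ∀ v, H.degree v = G.degree v + (if v = x then 1 else 0) + (if v = y then 1 else 0) by
    obtain ⟨H, x, y, hH, hle, heq⟩ := this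
    exact ⟨H, fun v => (heq v).trans_le (hle v), hH, by
      rw [card_edgeFinset_eq_add_one_of_degree_eq heq]
      exact Nat.lt_succ_self _⟩
  by_cases hW : ∀ w ∈ ({w | k ≤ G.edist w x ∧ k ≤ G.edist w y} : Finset V), G.degree w = d
  · obtain ⟨u, hu, v, hv, huv⟩ := exists_adj_of_card_le_two_mul_card hdeg hx hW
      (card_le_two_mul_card_filter_le_edist (Nat.le_sub_one_of_lt hx) (Nat.le_sub_one_of_lt hy)
        (fun v => (hdeg v).trans (by omega)) hcard)
    rw [mem_filter_univ] at hu hv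
    exact ⟨switch G u v x y, x, y, add_one_le_egirth_switch hgirth huv hu.1 hv.1 hv.2, hxy,
      degree_switch huv (hsep hu.1) (hsep hv.2) (hsep hv.1).1⟩
  · push Not at hW
    obtain ⟨w, hw, hwd⟩ := hW
    rw [mem_filter_univ] at hw
    obtain ⟨hne, hadj⟩ := hsep hw.1
    exact ⟨G ⊔ edge w x, w, x, add_one_le_egirth_sup_edge hgirth hw.1, by grind,
      by convert degree_sup_edge hne hadj⟩

end Switch

end ErdosSachs

open ErdosSachs SimpleGraph in
theorem erdos_sachs_general {V : Type*} [Fintype V] (d g : ℕ) (hg : 3 ≤ g)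
    (heven : Even (Fintype.card V * d))
    (hcard : 4 * ∑ i ∈ Finset.range (g - 1), (d - 1) ^ i ≤ Fintype.card V) :
    ∃ (G : SimpleGraph V) (_ : DecidableRel G.Adj),
      G.IsRegularOfDegree d ∧ (g : ℕ∞) ≤ G.egirth := by
  classical
  obtain ⟨k, rfl⟩ : ∃ k, g = k + 1 := ⟨g - 1, by omega⟩
  obtain ⟨G, ⟨hdeg, hgirth⟩, hmax⟩ := Set.exists_max_image
    {G : SimpleGraph V | (∀ v, G.degree v ≤ d) ∧ (k : ℕ∞) + 1 ≤ G.egirth}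
    (fun G => G.edgeFinset.card) (Set.toFinite _) ⟨⊥, by simp, egirth_bot.symm ▸ le_top⟩
  refine ⟨G, inferInstance, ?_, by exact_mod_cast hgirth⟩
  by_contra hreg
  obtain ⟨H, hHdeg, hHgirth, hlt⟩ :=
    exists_card_edgeFinset_lt_of_not_isRegularOfDegree (by omega) hdeg hgirth heven hcard hreg
  exact (hmax H ⟨hHdeg, hHgirth⟩).not_gt hlt

/-- **Erdős–Sachs theorem.** For all `d ≥ 2` and `g ≥ 3` there is a `d`-regular graph with
girth at least `g` on at most `4·∑_{i=0}^{g-2}(d-1)^i` vertices. -/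
theorem erdos_sachs (d g : ℕ) (hd : 2 ≤ d) (hg : 3 ≤ g) :
    ∃ (V : Type) (_ : Fintype V) (G : SimpleGraph V) (_ : DecidableRel G.Adj),
      G.IsRegularOfDegree d ∧
      (g : ℕ∞) ≤ G.egirth ∧
      Fintype.card V ≤ 4 * ∑ i ∈ Finset.range (g - 1), (d - 1) ^ i := by
  have heven : Even (4 * ∑ i ∈ Finset.range (g - 1), (d - 1) ^ i) :=
    Even.mul_right (by decide) _
  obtain ⟨G, hdec, hreg, hgirth⟩ := erdos_sachs_general (V := Fin _) d g hg
    (by simpa using heven.mul_right d) (Fintype.card_fin _).ge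
  exact ⟨_, inferInstance, G, hdec, hreg, hgirth, (Fintype.card_fin _).le⟩
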